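/- Let α ≥ 1 and β ≥ 2 be real numbers with 2(1 − 1/β)² ≥ 1, and suppose ε₀ := (α/2)·exp(−(1/α)(1 + 1/β)) − 1 > 0. Let (G,L) be a triangle-free graph/list pair satisfying |L(u)| ≥ α·Δ(u) + β for every node u, let Δ be the maximum degree of G and q the total number of distinct colors appearing in the lists. Then Z(G,L) > 0 and for every node v and every color i ∈ L(v): P_{G,L}(c(v)=i) ≥ q^{−1}(1 − 1/β)^Δ, and if Δ(v) > 0 then P_{G,L}(c(v)=i) ≤ 1/(2(1+ε₀)Δ(v)). -/

import Mathlib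

open scoped Classical

/-- The set of proper list colorings of the graph/list pair `(G, L)`. -/
def properColorings {V : Type} (G : SimpleGraph V) (L : V → Finset ℕ) : Set (V → ℕ) :=
  {c | (∀ v, c v ∈ L v) ∧ ∀ u w, G.Adj u w → c u ≠ c w}

/-- `Z(G,L)`: the number of proper list colorings. -/
noncomputable def numColorings {V : Type} (G : SimpleGraph V) (L : V → Finset ℕ) : ℕ :=
  (properColorings G L).ncard

/-- `P_{G,L}(E)`: probability of the event `E` under the uniform distribution on
proper list colorings. -/
noncomputable def colorProb {V : Type} (G : SimpleGraph V) (L : V → Finset ℕ)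
    (E : Set (V → ℕ)) : ℝ :=
  ((properColorings G L ∩ E).ncard : ℝ) / (numColorings G L : ℝ)

/-- The degree of a node `u` in `G`. -/
noncomputable def deg {V : Type} (G : SimpleGraph V) (u : V) : ℕ :=
  (G.neighborSet u).ncard

/-- The maximum degree `Δ` of `G`. -/
noncomputable def maxDeg (V : Type) [Fintype V] (G : SimpleGraph V) : ℕ :=
  Finset.univ.sup (deg G)

/-
Condition on the colors of all nodes outside the closed neighborhood of `v`. Since `G` is
triangle-free, the neighbors of `v` are pairwise non-adjacent, so the number of ways to complete
the coloring with `c v = k` is the product over the neighbors `u` of the number of colors other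
than `k` in the residual list of `u`. Both bounds compare the value of this product at `k = i`
with its sum over `k ∈ L v`. Discarding a color shrinks each residual list by a factor of at least
`1 - 1/β`, which gives the lower bound. For the upper bound, Jensen's inequality bounds the
average over `k` from below by the geometric mean; to the sum of logarithms each residual list `M`
contributes `log (1 - 1/|M|)` at most `|M|` times, hence at least `-(1 + 1/|M|)` in total.
-/

section ListSums

open Finset

lemma neg_add_sq_le_log_one_sub {x : ℝ} (h0 : 0 ≤ x) (h1 : x ≤ 1 / 2) :
    -(x + x ^ 2) ≤ Real.log (1 - x) := by
  have taylor := (abs_le.1 (Real.abs_log_sub_add_sum_range_le (x := x)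
    (by rw [abs_of_nonneg h0]; linarith) 4)).1
  have remainder : |x| ^ 5 / (1 - |x|) ≤ 2 * x ^ 5 := by
    rw [abs_of_nonneg h0, div_le_iff₀ (by linarith)]
    nlinarith [pow_nonneg h0 5]
  have tail : x ^ 3 / 3 + x ^ 4 / 4 + 2 * x ^ 5 ≤ x ^ 2 / 2 := by
    have : x / 3 + x ^ 2 / 4 + 2 * x ^ 3 ≤ 1 / 2 := by
      nlinarith [mul_nonneg h0 (sub_nonneg.2 h1), pow_nonneg h0 2]
    nlinarith [mul_le_mul_of_nonneg_left this (sq_nonneg x)]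
  norm_num [sum_range_succ] at taylor
  linarith

lemma neg_one_add_inv_le_mul_log {m : ℝ} (hm : 2 ≤ m) :
    -(1 + 1 / m) ≤ m * Real.log (1 - 1 / m) := by
  have : 0 < m := by linarith
  calc -(1 + 1 / m) = m * -(1 / m + (1 / m) ^ 2) := by field_simp
    _ ≤ m * Real.log (1 - 1 / m) := by
        gcongr
        exact neg_add_sq_le_log_one_sub (by positivity) (one_div_le_one_div_of_le two_pos hm)

-- Jensen's inequality for `exp`, proved with the tangent line at `a`.
lemma card_mul_exp_le_sum_exp {ι : Type*} {s : Finset ι} {f : ι → ℝ} {a : ℝ}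
    (h : #s * a ≤ ∑ k ∈ s, f k) : #s * Real.exp a ≤ ∑ k ∈ s, Real.exp (f k) := by
  have tangent (k : ι) : Real.exp a * (f k - a + 1) ≤ Real.exp (f k) := by
    calc Real.exp a * (f k - a + 1) ≤ Real.exp a * Real.exp (f k - a) := by
          gcongr
          exact Real.add_one_le_exp _
      _ = Real.exp (f k) := by rw [← Real.exp_add, add_sub_cancel]
  calc #s * Real.exp a ≤ Real.exp a * (∑ k ∈ s, f k - #s * a + #s) := by
        nlinarith [Real.exp_pos a]
    _ = ∑ k ∈ s, Real.exp a * (f k - a + 1) := by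
        simp [← mul_sum, sum_add_distrib, sum_sub_distrib]
    _ ≤ ∑ k ∈ s, Real.exp (f k) := sum_le_sum fun k _ => tangent k

lemma mul_card_le_mul_card_of_fiberwise {ι κ : Type*} [DecidableEq ι] [DecidableEq κ]
    {R : Type*} [Semiring R] [PartialOrder R] [IsOrderedAddMonoid R]
    {s t : Finset ι} (f : ι → κ) {a b : R}
    (h : ∀ x ∈ s ∪ t, a * #{y ∈ s | f y = f x} ≤ b * #{y ∈ t | f y = f x}) :
    a * #s ≤ b * #t := by
  have hs : Set.MapsTo f s ((s ∪ t).image f : Finset κ) := fun x hx =>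
    mem_image_of_mem f (mem_union_left t hx)
  have ht : Set.MapsTo f t ((s ∪ t).image f : Finset κ) := fun x hx =>
    mem_image_of_mem f (mem_union_right s hx)
  rw [card_eq_sum_card_fiberwise hs, card_eq_sum_card_fiberwise ht]
  push_cast
  rw [mul_sum, mul_sum]
  exact sum_le_sum <| forall_mem_image.2 h

variable {ι κ : Type*} [DecidableEq κ]

lemma card_erase_div_card {M : Finset κ} (hM : M.Nonempty) (k : κ) :
    (#(M.erase k) : ℝ) / #M = if k ∈ M then 1 - 1 / (#M : ℝ) else 1 := by
  have hM0 : (#M : ℝ) ≠ 0 := by exact_mod_cast hM.card_ne_zero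
  split_ifs with hk
  · rw [cast_card_erase_of_mem hk, sub_div, div_self hM0]
  · rw [erase_eq_of_notMem hk, div_self hM0]

lemma neg_one_add_inv_le_sum_log_card_erase {M : Finset κ} (hM : 2 ≤ #M) (s : Finset κ) :
    -(1 + 1 / (#M : ℝ)) ≤ ∑ k ∈ s, Real.log (#(M.erase k) / #M) := by
  have hM2 : (2 : ℝ) ≤ #M := by exact_mod_cast hM
  have hlog : Real.log (1 - 1 / (#M : ℝ)) ≤ 0 :=
    Real.log_nonpos (sub_nonneg.2 ((div_le_one (by linarith)).2 (by linarith)))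
      (sub_le_self _ (by positivity))
  calc -(1 + 1 / (#M : ℝ)) ≤ #M * Real.log (1 - 1 / (#M : ℝ)) := neg_one_add_inv_le_mul_log hM2
    _ ≤ #{k ∈ s | k ∈ M} * Real.log (1 - 1 / (#M : ℝ)) := by
        refine mul_le_mul_of_nonpos_right ?_ hlog
        exact_mod_cast card_le_card fun k hk => (mem_filter.1 hk).2
    _ = ∑ k ∈ s, Real.log (#(M.erase k) / #M) := by
        simp only [card_erase_div_card (card_pos.1 (by lia : 0 < #M)), apply_ite Real.log,
          Real.log_one, ← sum_filter, sum_const, nsmul_eq_mul]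

lemma prod_card_erase_le_prod_card (N : Finset ι) (M : ι → Finset κ) (k : κ) :
    ∏ u ∈ N, (#((M u).erase k) : ℝ) ≤ ∏ u ∈ N, (#(M u) : ℝ) :=
  prod_le_prod (fun _ _ => Nat.cast_nonneg _) fun _ _ => by exact_mod_cast card_erase_le

lemma pow_card_mul_prod_card_le_prod_card_erase {N : Finset ι} {M : ι → Finset κ} {b : ℝ}
    (hb : 1 ≤ b) (hM : ∀ u ∈ N, b ≤ #(M u)) (k : κ) :
    (1 - 1 / b) ^ #N * ∏ u ∈ N, (#(M u) : ℝ) ≤ ∏ u ∈ N, (#((M u).erase k) : ℝ) := by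
  have hb0 : 0 ≤ 1 - 1 / b := sub_nonneg.2 ((div_le_one (by linarith)).2 hb)
  rw [← prod_const, ← prod_mul_distrib]
  refine prod_le_prod (fun _ _ => by positivity) fun u hu => ?_
  have hMu : (0 : ℝ) < #(M u) := by linarith [hM u hu]
  have hinv : 1 / (#(M u) : ℝ) ≤ 1 / b := one_div_le_one_div_of_le (by linarith) (hM u hu)
  rw [← le_div_iff₀ hMu, card_erase_div_card (card_pos.1 (by exact_mod_cast hMu))]
  split_ifs
  · linarith
  · exact sub_le_self _ (by positivity)

lemma pow_card_mul_sum_prod_card_erase_le {N : Finset ι} {M : ι → Finset κ} {b : ℝ}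
    (hb : 1 ≤ b) (hM : ∀ u ∈ N, b ≤ #(M u)) (s : Finset κ) (i : κ) :
    (1 - 1 / b) ^ #N * ∑ k ∈ s, ∏ u ∈ N, (#((M u).erase k) : ℝ) ≤
      #s * ∏ u ∈ N, (#((M u).erase i) : ℝ) := by
  have hb0 : 0 ≤ 1 - 1 / b := sub_nonneg.2 ((div_le_one (by linarith)).2 hb)
  calc (1 - 1 / b) ^ #N * ∑ k ∈ s, ∏ u ∈ N, (#((M u).erase k) : ℝ)
      ≤ (1 - 1 / b) ^ #N * ∑ _k ∈ s, ∏ u ∈ N, (#(M u) : ℝ) := by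
        gcongr ?_ * ?_
        exact sum_le_sum fun k _ => prod_card_erase_le_prod_card N M k
    _ = #s * ((1 - 1 / b) ^ #N * ∏ u ∈ N, (#(M u) : ℝ)) := by
        rw [sum_const, nsmul_eq_mul, mul_left_comm]
    _ ≤ #s * ∏ u ∈ N, (#((M u).erase i) : ℝ) := by
        gcongr
        exact pow_card_mul_prod_card_le_prod_card_erase hb hM i

lemma card_mul_exp_mul_prod_card_le_sum {N : Finset ι} {M : ι → Finset κ} {b : ℝ}
    (hb : 0 < b) (h2 : ∀ u ∈ N, 2 ≤ #(M u)) (hM : ∀ u ∈ N, b ≤ #(M u)) (s : Finset κ) :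
    #s * Real.exp (-(#N / #s) * (1 + 1 / b)) * ∏ u ∈ N, (#(M u) : ℝ) ≤
      ∑ k ∈ s, ∏ u ∈ N, (#((M u).erase k) : ℝ) := by
  rcases s.eq_empty_or_nonempty with rfl | hs
  · simp
  have hs0 : (#s : ℝ) ≠ 0 := by exact_mod_cast hs.card_ne_zero
  have erase_pos : ∀ u ∈ N, ∀ k, (0 : ℝ) < #((M u).erase k) := fun u hu k => by
    have := pred_card_le_card_erase (s := M u) (a := k)
    have := h2 u hu
    exact_mod_cast (by lia : 0 < #((M u).erase k))
  have hM0 : ∀ u ∈ N, (0 : ℝ) < #(M u) := fun u hu => hb.trans_le (hM u hu)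
  have prod_eq (k : κ) : ∏ u ∈ N, (#((M u).erase k) : ℝ) =
      Real.exp (∑ u ∈ N, Real.log (#((M u).erase k) / #(M u))) * ∏ u ∈ N, (#(M u) : ℝ) := by
    rw [Real.exp_sum, ← prod_mul_distrib]
    refine prod_congr rfl fun u hu => ?_
    rw [Real.exp_log (div_pos (erase_pos u hu k) (hM0 u hu)), div_mul_cancel₀ _ (hM0 u hu).ne']
  have log_mean : #s * (-(#N / #s) * (1 + 1 / b)) ≤
      ∑ k ∈ s, ∑ u ∈ N, Real.log (#((M u).erase k) / #(M u)) := by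
    rw [sum_comm]
    calc #s * (-(#N / #s) * (1 + 1 / b)) = ∑ _u ∈ N, -(1 + 1 / b) := by
          rw [sum_const, nsmul_eq_mul]; field_simp
      _ ≤ _ := sum_le_sum fun u hu =>
          (neg_le_neg (by gcongr; exact hM u hu)).trans
            (neg_one_add_inv_le_sum_log_card_erase (h2 u hu) s)
  simp_rw [prod_eq]
  rw [← sum_mul]
  gcongr
  exact card_mul_exp_le_sum_exp log_mean

lemma mul_card_mul_exp_mul_prod_card_erase_le {N : Finset ι} {M : ι → Finset κ} {s : Finset κ}
    {a b : ℝ} (ha : 0 < a) (hb : 0 < b) (h2 : ∀ u ∈ N, 2 ≤ #(M u)) (hM : ∀ u ∈ N, b ≤ #(M u))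
    (hs : a * #N ≤ #s) (i : κ) :
    a * Real.exp (-(1 / a) * (1 + 1 / b)) * #N * ∏ u ∈ N, (#((M u).erase i) : ℝ) ≤
      ∑ k ∈ s, ∏ u ∈ N, (#((M u).erase k) : ℝ) := by
  have ratio : (#N : ℝ) / #s ≤ 1 / a := by
    refine div_le_of_le_mul₀ (by positivity) (by positivity) ?_
    rwa [one_div, le_inv_mul_iff₀ ha]
  calc a * Real.exp (-(1 / a) * (1 + 1 / b)) * #N * ∏ u ∈ N, (#((M u).erase i) : ℝ)
      = a * #N * Real.exp (-(1 / a) * (1 + 1 / b)) * ∏ u ∈ N, (#((M u).erase i) : ℝ) := by ring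
    _ ≤ #s * Real.exp (-(#N / #s) * (1 + 1 / b)) * ∏ u ∈ N, (#(M u) : ℝ) := by
        gcongr ?_ * Real.exp (-?_ * _) * ?_
        exact prod_card_erase_le_prod_card N M i
    _ ≤ _ := card_mul_exp_mul_prod_card_le_sum hb h2 hM s

end ListSums

section ListColorings

open Finset

variable {V : Type} {G : SimpleGraph V} {L : V → Finset ℕ} {v : V}

/-- The nodes outside the closed neighborhood of `v`; the marginal of `v` is computed conditionally
on their colors. -/
def farNodes (G : SimpleGraph V) (v : V) : Set V :=
  {w | w ≠ v ∧ ¬ G.Adj v w}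

/-- The colors that remain available at `u` once the neighbors of `u` other than `v` are colored
by `c`. -/
noncomputable def residualList (G : SimpleGraph V) (L : V → Finset ℕ) (v : V) (c : V → ℕ) (u : V) :
    Finset ℕ :=
  {x ∈ L u | ∀ w, G.Adj u w → w ≠ v → c w ≠ x}

lemma mem_residualList {c : V → ℕ} {u : V} {x : ℕ} :
    x ∈ residualList G L v c u ↔ x ∈ L u ∧ ∀ w, G.Adj u w → w ≠ v → c w ≠ x :=
  mem_filter

lemma mem_farNodes_of_adj_of_adj (hG : G.CliqueFree 3) {u w : V} (hvu : G.Adj v u)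
    (huw : G.Adj u w) (hwv : w ≠ v) : w ∈ farNodes G v :=
  ⟨hwv, fun hvw => hG {v, u, w} (SimpleGraph.is3Clique_triple_iff.2 ⟨hvu, hvw, huw⟩)⟩

lemma residualList_congr (hG : G.CliqueFree 3) {c c₀ : V → ℕ} (h : (farNodes G v).EqOn c c₀)
    {u : V} (hu : G.Adj v u) : residualList G L v c u = residualList G L v c₀ u := by
  ext x
  simp only [mem_residualList]
  refine and_congr_right fun _ => forall₃_congr fun w huw hwv => ?_
  rw [h (mem_farNodes_of_adj_of_adj hG hu huw hwv)]

lemma mem_properColorings_iff_of_eqOn_farNodes (hG : G.CliqueFree 3) {c c₀ : V → ℕ}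
    (hc₀ : c₀ ∈ properColorings G L) (h : (farNodes G v).EqOn c c₀) :
    c ∈ properColorings G L ↔
      c v ∈ L v ∧ ∀ u, G.Adj v u → c u ∈ (residualList G L v c₀ u).erase (c v) := by
  constructor
  · refine fun ⟨hcL, hc⟩ => ⟨hcL v, fun u hu => mem_erase.2 ⟨hc u v hu.symm, ?_⟩⟩
    rw [← residualList_congr hG h hu]
    exact mem_residualList.2 ⟨hcL u, fun w huw _ => (hc u w huw).symm⟩
  · rintro ⟨hv, hN⟩
    have ne_of_adj_neighbor : ∀ u w, G.Adj v u → G.Adj u w → c u ≠ c w := by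
      intro u w hu huw
      have hcu := mem_erase.1 (hN u hu)
      rw [← residualList_congr hG h hu] at hcu
      rcases eq_or_ne w v with rfl | hwv
      · exact hcu.1
      · exact ((mem_residualList.1 hcu.2).2 w huw hwv).symm
    refine ⟨fun u => ?_, fun u w huw => ?_⟩
    · rcases eq_or_ne u v with rfl | huv
      · exact hv
      by_cases hu : G.Adj v u
      · exact (mem_residualList.1 (mem_of_mem_erase (hN u hu))).1
      · rw [h ⟨huv, hu⟩]
        exact hc₀.1 u
    · by_cases hu : G.Adj v u
      · exact ne_of_adj_neighbor u w hu huw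
      by_cases hw : G.Adj v w
      · exact (ne_of_adj_neighbor w u hw huw.symm).symm
      rw [h ⟨by rintro rfl; exact hw huw, hu⟩, h ⟨by rintro rfl; exact hu huw.symm, hw⟩]
      exact hc₀.2 u w huw

/-- The lists for which, when `c₀` is proper and `k ∈ L v`, choosing a color at each node
independently yields exactly the proper colorings that agree with `c₀` on `farNodes G v` and give
`v` the color `k`. -/
noncomputable def extensionLists (G : SimpleGraph V) (L : V → Finset ℕ) (v : V) (c₀ : V → ℕ)
    (k : ℕ) (u : V) : Finset ℕ :=
  if u = v then {k} else if G.Adj v u then (residualList G L v c₀ u).erase k else {c₀ u}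

lemma forall_mem_extensionLists_iff {c c₀ : V → ℕ} {k : ℕ} :
    (∀ u, c u ∈ extensionLists G L v c₀ k u) ↔
      c v = k ∧ (∀ u, G.Adj v u → c u ∈ (residualList G L v c₀ u).erase k) ∧
        (farNodes G v).EqOn c c₀ := by
  constructor
  · refine fun h => ⟨by simpa [extensionLists] using h v, fun u hu => ?_, fun u hu => ?_⟩
    · simpa only [extensionLists, if_neg hu.ne', if_pos hu] using h u
    · simpa only [extensionLists, if_neg hu.1, if_neg hu.2, mem_singleton] using h u
  · rintro ⟨hv, hN, hfar⟩ u
    unfold extensionLists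
    split_ifs with huv hu
    · rw [huv, hv, mem_singleton]
    · exact hN u hu
    · exact mem_singleton.2 (hfar ⟨huv, hu⟩)

lemma card_neighborFinset_eq_deg [Fintype V] (G : SimpleGraph V) (v : V) :
    #(G.neighborFinset v) = deg G v :=
  (Set.ncard_eq_toFinset_card' _).symm

lemma card_lt_card_residualList_add_deg [Finite V] (c : V → ℕ) {u : V} (hu : G.Adj v u) :
    #(L u) < #(residualList G L v c u) + deg G u := by
  have := Fintype.ofFinite V
  have cover : L u ⊆ residualList G L v c u ∪ ((G.neighborFinset u).erase v).image c := by
    intro x hx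
    by_contra hxc
    simp only [mem_union, mem_residualList, mem_image, mem_erase, SimpleGraph.mem_neighborFinset,
      not_or, not_and, not_exists] at hxc
    exact hxc.1 hx fun w huw hwv => hxc.2 w ⟨hwv, huw⟩
  have card_erase : #((G.neighborFinset u).erase v) < deg G u := by
    rw [← card_neighborFinset_eq_deg]
    exact card_erase_lt_of_mem ((G.mem_neighborFinset u v).2 hu.symm)
  calc #(L u) ≤ #(residualList G L v c u) + #(((G.neighborFinset u).erase v).image c) :=
        (card_le_card cover).trans (card_union_le _ _)
    _ < #(residualList G L v c u) + deg G u := by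
        gcongr
        exact card_image_le.trans_lt card_erase

lemma exists_mem_forall_adj_ne [Finite V] (h : deg G v < #(L v)) (c : V → ℕ) :
    ∃ x ∈ L v, ∀ w, G.Adj v w → c w ≠ x := by
  have := Fintype.ofFinite V
  have : #((G.neighborFinset v).image c) < #(L v) :=
    card_image_le.trans_lt (by rwa [card_neighborFinset_eq_deg])
  obtain ⟨x, hx, hxc⟩ := exists_mem_notMem_of_card_lt_card this
  exact ⟨x, hx, fun w hw hwx => hxc (mem_image.2 ⟨w, (G.mem_neighborFinset v w).2 hw, hwx⟩)⟩

lemma exists_properOn [Finite V] (h : ∀ v, deg G v < #(L v)) (S : Finset V) :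
    ∃ c : V → ℕ, (∀ v, c v ∈ L v) ∧ ∀ u ∈ S, ∀ w ∈ S, G.Adj u w → c u ≠ c w := by
  induction S using Finset.induction_on with
  | empty =>
    choose c hc using fun v => card_pos.1 ((Nat.zero_le _).trans_lt (h v))
    exact ⟨c, hc, by simp⟩
  | insert a S ha ih =>
    obtain ⟨c, hcL, hc⟩ := ih
    obtain ⟨x, hxL, hx⟩ := exists_mem_forall_adj_ne (h a) c
    refine ⟨Function.update c a x, fun v => ?_, fun u hu w hw huw => ?_⟩
    · rcases eq_or_ne v a with rfl | hva
      · simpa using hxL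
      · simpa [hva] using hcL v
    · rcases eq_or_ne u a with rfl | hua
      · simpa [huw.ne'] using (hx w huw).symm
      rcases eq_or_ne w a with rfl | hwa
      · simpa [hua] using hx u huw.symm
      simpa [hua, hwa] using hc u (mem_of_mem_insert_of_ne hu hua) w
        (mem_of_mem_insert_of_ne hw hwa) huw

/-- The set `properColorings G L` as a `Finset`, for counting by fibers. -/
noncomputable def properColoringFinset [Fintype V] (G : SimpleGraph V) (L : V → Finset ℕ) :
    Finset (V → ℕ) :=
  {c ∈ Fintype.piFinset L | c ∈ properColorings G L}

lemma mem_properColoringFinset [Fintype V] {c : V → ℕ} :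
    c ∈ properColoringFinset G L ↔ c ∈ properColorings G L := by
  simpa [properColoringFinset] using fun hc : c ∈ properColorings G L => hc.1

lemma card_properColoringFinset [Fintype V] (G : SimpleGraph V) (L : V → Finset ℕ) :
    #(properColoringFinset G L) = numColorings G L := by
  rw [numColorings, ← Set.ncard_coe_finset]
  congr 1
  ext c
  exact mem_properColoringFinset

lemma colorProb_setOf [Fintype V] (G : SimpleGraph V) (L : V → Finset ℕ) (p : (V → ℕ) → Prop)
    [DecidablePred p] :
    colorProb G L {c | p c} =
      (#{c ∈ properColoringFinset G L | p c} : ℝ) / #(properColoringFinset G L) := by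
  rw [colorProb, card_properColoringFinset, ← Set.ncard_coe_finset]
  congr 3
  ext c
  simp [mem_properColoringFinset]

lemma numColorings_pos [Finite V] (h : ∀ v, deg G v < #(L v)) : 0 < numColorings G L := by
  have := Fintype.ofFinite V
  obtain ⟨c, hcL, hc⟩ := exists_properOn h univ
  rw [← card_properColoringFinset, card_pos]
  exact ⟨c, mem_properColoringFinset.2 ⟨hcL, fun u w => hc u (mem_univ u) w (mem_univ w)⟩⟩

lemma deg_lt_card_of_add_le {β : ℝ} (hβ : 0 < β) (h : deg G v + β ≤ #(L v)) : deg G v < #(L v) := by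
  exact_mod_cast (by linarith : (deg G v : ℝ) < #(L v))

section Counting

variable [Fintype V]

lemma card_properColoringFinset_pos (h : ∀ v, deg G v < #(L v)) :
    (0 : ℝ) < #(properColoringFinset G L) := by
  rw [card_properColoringFinset]
  exact_mod_cast numColorings_pos h

lemma card_piFinset_extensionLists (G : SimpleGraph V) (L : V → Finset ℕ) (v : V) (c₀ : V → ℕ)
    (k : ℕ) : #(Fintype.piFinset (extensionLists G L v c₀ k)) =
      ∏ u ∈ G.neighborFinset v, #((residualList G L v c₀ u).erase k) := by
  rw [Fintype.card_piFinset, ← prod_subset (subset_univ (G.neighborFinset v))]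
  · refine prod_congr rfl fun u hu => ?_
    rw [SimpleGraph.mem_neighborFinset] at hu
    rw [extensionLists, if_neg hu.ne', if_pos hu]
  · intro u _ hu
    rw [SimpleGraph.mem_neighborFinset] at hu
    unfold extensionLists
    split_ifs <;> exact card_singleton _

lemma card_filter_eq_and_eqOn_farNodes (hG : G.CliqueFree 3) {c₀ : V → ℕ}
    (hc₀ : c₀ ∈ properColorings G L) {k : ℕ} (hk : k ∈ L v) :
    #{c ∈ properColoringFinset G L | c v = k ∧ (farNodes G v).EqOn c c₀} =
      ∏ u ∈ G.neighborFinset v, #((residualList G L v c₀ u).erase k) := by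
  rw [← card_piFinset_extensionLists]
  congr 1
  ext c
  rw [mem_filter, mem_properColoringFinset, Fintype.mem_piFinset, forall_mem_extensionLists_iff]
  constructor
  · rintro ⟨hc, rfl, hfar⟩
    exact ⟨rfl, ((mem_properColorings_iff_of_eqOn_farNodes hG hc₀ hfar).1 hc).2, hfar⟩
  · rintro ⟨rfl, hN, hfar⟩
    exact ⟨(mem_properColorings_iff_of_eqOn_farNodes hG hc₀ hfar).2 ⟨hk, hN⟩, rfl, hfar⟩

lemma card_filter_eqOn_farNodes (hG : G.CliqueFree 3) {c₀ : V → ℕ}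
    (hc₀ : c₀ ∈ properColorings G L) :
    #{c ∈ properColoringFinset G L | (farNodes G v).EqOn c c₀} =
      ∑ k ∈ L v, ∏ u ∈ G.neighborFinset v, #((residualList G L v c₀ u).erase k) := by
  rw [card_eq_sum_card_fiberwise (f := fun c => c v) (t := L v)]
  · refine sum_congr rfl fun k hk => ?_
    rw [← card_filter_eq_and_eqOn_farNodes hG hc₀ hk, filter_filter]
    simp only [and_comm]
  · exact fun c hc => (mem_properColoringFinset.1 (mem_filter.1 hc).1).1 v

lemma add_one_le_card_residualList {β : ℝ} (hL : ∀ u, deg G u + β ≤ #(L u)) (c : V → ℕ) {u : V}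
    (hu : u ∈ G.neighborFinset v) : β + 1 ≤ #(residualList G L v c u) := by
  have : (#(L u) : ℝ) + 1 ≤ #(residualList G L v c u) + deg G u := by
    exact_mod_cast card_lt_card_residualList_add_deg c ((G.mem_neighborFinset v u).1 hu)
  linarith [hL u]

lemma pow_deg_mul_card_properColoringFinset_le {β : ℝ} (hβ : 1 ≤ β) (hG : G.CliqueFree 3)
    (hL : ∀ u, deg G u + β ≤ #(L u)) {i : ℕ} (hi : i ∈ L v) :
    (1 - 1 / β) ^ deg G v * #(properColoringFinset G L) ≤
      #(L v) * #{c ∈ properColoringFinset G L | c v = i} := by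
  refine mul_card_le_mul_card_of_fiberwise (farNodes G v).domRestrict fun c₀ hc₀ => ?_
  have hc₀ : c₀ ∈ properColorings G L :=
    mem_properColoringFinset.1 (union_subset Subset.rfl (filter_subset _ _) hc₀)
  simp only [filter_filter, Set.domRestrict_eq_domRestrict_iff]
  rw [card_filter_eqOn_farNodes hG hc₀, card_filter_eq_and_eqOn_farNodes hG hc₀ hi,
    ← card_neighborFinset_eq_deg]
  push_cast
  refine pow_card_mul_sum_prod_card_erase_le hβ (fun u hu => ?_) (L v) i
  linarith [add_one_le_card_residualList hL c₀ hu]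

lemma mul_exp_mul_deg_mul_card_filter_le {α β : ℝ} (hα : 0 < α) (hβ : 0 < β) (hG : G.CliqueFree 3)
    (hL : ∀ u, deg G u + β ≤ #(L u)) (hLv : α * deg G v ≤ #(L v)) {i : ℕ} (hi : i ∈ L v) :
    α * Real.exp (-(1 / α) * (1 + 1 / β)) * deg G v *
      #{c ∈ properColoringFinset G L | c v = i} ≤ #(properColoringFinset G L) := by
  rw [← one_mul (#(properColoringFinset G L) : ℝ)]
  refine mul_card_le_mul_card_of_fiberwise (farNodes G v).domRestrict fun c₀ hc₀ => ?_
  have hc₀ : c₀ ∈ properColorings G L :=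
    mem_properColoringFinset.1 (union_subset (filter_subset _ _) Subset.rfl hc₀)
  have hres : ∀ u ∈ G.neighborFinset v, β + 1 ≤ #(residualList G L v c₀ u) := fun u hu =>
    add_one_le_card_residualList hL c₀ hu
  have two_le : ∀ u ∈ G.neighborFinset v, 2 ≤ #(residualList G L v c₀ u) := fun u hu => by
    have : (1 : ℝ) < #(residualList G L v c₀ u) := by linarith [hres u hu]
    exact_mod_cast this
  simp only [filter_filter, Set.domRestrict_eq_domRestrict_iff]
  rw [one_mul, card_filter_eqOn_farNodes hG hc₀, card_filter_eq_and_eqOn_farNodes hG hc₀ hi,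
    ← card_neighborFinset_eq_deg]
  push_cast
  refine mul_card_mul_exp_mul_prod_card_erase_le hα hβ two_le (fun u hu => ?_) ?_ i
  · linarith [hres u hu]
  · rwa [card_neighborFinset_eq_deg]

lemma inv_card_biUnion_mul_pow_maxDeg_le {b : ℝ} (hb : 0 ≤ b) (hb1 : b ≤ 1)
    (hv : (L v).Nonempty) :
    (#(univ.biUnion L) : ℝ)⁻¹ * b ^ maxDeg V G ≤ (#(L v) : ℝ)⁻¹ * b ^ deg G v := by
  have : (0 : ℝ) < #(L v) := by exact_mod_cast hv.card_pos
  gcongr ?_⁻¹ * ?_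
  · exact_mod_cast card_le_card (subset_biUnion_of_mem L (mem_univ v))
  · exact pow_le_pow_of_le_one hb hb1 (le_sup (f := deg G) (mem_univ v))

end Counting

lemma inv_card_mul_pow_deg_le_colorProb [Finite V] {β : ℝ} (hβ : 1 ≤ β) (hG : G.CliqueFree 3)
    (hL : ∀ u, deg G u + β ≤ #(L u)) {i : ℕ} (hi : i ∈ L v) :
    (#(L v) : ℝ)⁻¹ * (1 - 1 / β) ^ deg G v ≤ colorProb G L {c | c v = i} := by
  have := Fintype.ofFinite V
  have hZ := card_properColoringFinset_pos fun u => deg_lt_card_of_add_le (by linarith) (hL u)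
  have hLv : (0 : ℝ) < #(L v) := by exact_mod_cast card_pos.2 ⟨i, hi⟩
  rw [colorProb_setOf, le_div_iff₀ hZ, mul_assoc, inv_mul_le_iff₀ hLv]
  exact pow_deg_mul_card_properColoringFinset_le hβ hG hL hi

lemma colorProb_le_one_div [Finite V] {α β : ℝ} (hα : 0 < α) (hβ : 0 < β) (hG : G.CliqueFree 3)
    (hL : ∀ u, deg G u + β ≤ #(L u)) (hLv : α * deg G v ≤ #(L v)) (hv : 0 < deg G v) {i : ℕ}
    (hi : i ∈ L v) :
    colorProb G L {c | c v = i} ≤ 1 / (α * Real.exp (-(1 / α) * (1 + 1 / β)) * deg G v) := by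
  have := Fintype.ofFinite V
  have hZ := card_properColoringFinset_pos fun u => deg_lt_card_of_add_le hβ (hL u)
  have : (0 : ℝ) < deg G v := by exact_mod_cast hv
  rw [colorProb_setOf, div_le_div_iff₀ hZ (by positivity), one_mul, mul_comm]
  exact mul_exp_mul_deg_mul_card_filter_le hα hβ hG hL hLv hi

end ListColorings

theorem stmt9_general {V : Type} [Fintype V] {α β : ℝ} (hα : 1 ≤ α) (hβ : 1 ≤ β)
    {G : SimpleGraph V} (hfree : G.CliqueFree 3) {L : V → Finset ℕ}
    (hL : ∀ u, α * (deg G u : ℝ) + β ≤ ((L u).card : ℝ)) :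
    0 < numColorings G L ∧
    ∀ v, ∀ i ∈ L v,
      (((Finset.univ.biUnion L).card : ℝ))⁻¹ * (1 - 1 / β) ^ (maxDeg V G)
          ≤ colorProb G L {c | c v = i} ∧
      (0 < deg G v →
        colorProb G L {c | c v = i}
          ≤ 1 / (α * Real.exp (-(1 / α) * (1 + 1 / β)) * (deg G v : ℝ))) := by
  have hβ0 : 0 < β := by linarith
  have hL1 (u : V) : deg G u + β ≤ ((L u).card : ℝ) :=
    (add_le_add_left (le_mul_of_one_le_left (Nat.cast_nonneg _) hα) β).trans (hL u)
  refine ⟨numColorings_pos fun u => deg_lt_card_of_add_le hβ0 (hL1 u), fun v i hi => ?_⟩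
  refine ⟨?_, fun hv => ?_⟩
  · have hβ1 : 1 / β ≤ 1 := (div_le_one hβ0).2 hβ
    exact (inv_card_biUnion_mul_pow_maxDeg_le (by linarith) (sub_le_self _ (by positivity))
      ⟨i, hi⟩).trans (inv_card_mul_pow_deg_le_colorProb hβ hfree hL1 hi)
  · exact colorProb_le_one_div (by linarith) hβ0 hfree hL1 (by linarith [hL v]) hv hi

/-- Upper and lower bounds on the marginals for triangle-free graphs with
`|L(u)| ≥ α·Δ(u) + β`:  `q⁻¹(1 − 1/β)^Δ ≤ P_{G,L}(c(v)=i)`, and if `Δ(v) > 0` then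
`P_{G,L}(c(v)=i) ≤ 1/(2(1+ε₀)Δ(v))` where `ε₀ = (α/2)·e^{−(1/α)(1+1/β)} − 1`;
`q` is the total number of distinct colors appearing in the lists. -/
theorem stmt9 {V : Type} [Fintype V] (α β : ℝ) (hα : 1 ≤ α) (hβ : 2 ≤ β)
    (h2 : 1 ≤ 2 * (1 - 1 / β) ^ 2)
    (hε : 0 < α / 2 * Real.exp (-(1 / α) * (1 + 1 / β)) - 1)
    (G : SimpleGraph V) (hfree : G.CliqueFree 3)
    (L : V → Finset ℕ)
    (hL : ∀ u, α * (deg G u : ℝ) + β ≤ ((L u).card : ℝ)) :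
    0 < numColorings G L ∧
    ∀ v, ∀ i ∈ L v,
      (((Finset.univ.biUnion L).card : ℝ))⁻¹ * (1 - 1 / β) ^ (maxDeg V G)
          ≤ colorProb G L {c | c v = i} ∧
      (0 < deg G v →
        colorProb G L {c | c v = i}
          ≤ 1 / (2 * (1 + (α / 2 * Real.exp (-(1 / α) * (1 + 1 / β)) - 1)) *
              (deg G v : ℝ))) := by
  have hε₀ : 2 * (1 + (α / 2 * Real.exp (-(1 / α) * (1 + 1 / β)) - 1)) =
      α * Real.exp (-(1 / α) * (1 + 1 / β)) := by ring
  simpa only [hε₀] using stmt9_general hα (one_le_two.trans hβ) hfree hL
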